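/- arXiv:1404.2671 — 12 statements merged into one kernel-verified Lean document; each statement's English description precedes it below -/
import Mathlib

section
/- Let B = d_1 ≥ d_2 ≥ ⋯ ≥ d_n ≥ d_{n+1} = 0 be breakpoints and α_1,…,α_n reals satisfying α_j·b_j·e^{r_j·d_j/b_j} = α_{j−1}·b_{j−1}·e^{r_{j−1}·d_j/b_{j−1}} for every j = 2,…,n, and let p be the associated piecewise-exponential strategy. Then for every y ∈ (0,B], C(p,y) = y·α_1·b_1·e^{(r_1/b_1)·B}; in particular C(p,y)/(r_1·y) is the constant α_1·(b_1/r_1)·e^{(r_1/b_1)·B}. -/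
open MeasureTheory Set

/-- Cost of the pure action `(j, x)` against nature's stopping time `y`. -/
noncomputable def msrCost (r b x y : ℝ) : ℝ := if y < x then r * y else r * x + b

/-- A mixed strategy of the consumer: a tuple of finite Borel measures on `[0, B]`
(measures on `ℝ` concentrated on `[0, B]`) of total mass `1`. -/
def IsMixed (n : ℕ) (B : ℝ) (μ : ℕ → Measure ℝ) : Prop :=
  (∀ j, IsFiniteMeasure (μ j)) ∧
  (∀ j, μ j (Set.Icc 0 B)ᶜ = 0) ∧
  (∑ j ∈ Finset.range n, (μ j (Set.Icc 0 B)).toReal) = 1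

/-- Expected cost of the mixed strategy `μ` against nature's stopping time `y`. -/
noncomputable def expCost (n : ℕ) (r b : ℕ → ℝ) (μ : ℕ → Measure ℝ) (y : ℝ) : ℝ :=
  ∑ j ∈ Finset.range n, ∫ x, msrCost (r j) (b j) x y ∂(μ j)

/-- Competitive ratio of the mixed strategy `μ`: `sup_{y ∈ (0, B]} C(μ, y) / (r 0 · y)`. -/
noncomputable def ratio (n : ℕ) (r b : ℕ → ℝ) (B : ℝ) (μ : ℕ → Measure ℝ) : ℝ :=
  ⨆ y : Set.Ioc (0 : ℝ) B, expCost n r b μ (y : ℝ) / (r 0 * (y : ℝ))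

/-- A mixed strategy is optimal if its competitive ratio is minimal among all
mixed strategies. -/
def IsOptimal (n : ℕ) (r b : ℕ → ℝ) (B : ℝ) (μ : ℕ → Measure ℝ) : Prop :=
  IsMixed n B μ ∧
  ∀ ν : ℕ → Measure ℝ, IsMixed n B ν → ratio n r b B μ ≤ ratio n r b B ν

/-- Expected cost of a density strategy `p` against stopping time `y`:
`∑ j, (∫_0^y (r j · x + b j)·p j x dx + ∫_y^B r j · y · p j x dx)`. -/
noncomputable def densCost (n : ℕ) (r b : ℕ → ℝ) (B : ℝ) (p : ℕ → ℝ → ℝ) (y : ℝ) : ℝ :=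
  ∑ j ∈ Finset.range n,
    ((∫ x in (0:ℝ)..y, (r j * x + b j) * p j x) + ∫ x in y..B, r j * y * p j x)

lemma clampInt (G g : ℝ → ℝ) (hG : ∀ x, HasDerivAt G (g x) x) (hg : Continuous g)
    (l u a c : ℝ) (hlu : l ≤ u) :
    ∫ x in a..c, (if l < x ∧ x < u then g x else 0)
      = G (max l (min c u)) - G (max l (min a u)) := by
  have hGc : Continuous G := continuous_iff_continuousAt.2 fun x => (hG x).continuousAt
  refine MeasureTheory.integral_eq_of_hasDerivAt_off_countable (fun x => G (max l (min x u))) _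
    (s := {l, u}) (by simp) (by fun_prop) ?_ ?_
  · rintro x ⟨-, hx⟩
    simp only [Set.mem_insert_iff, Set.mem_singleton_iff, not_or] at hx
    rcases lt_or_gt_of_ne hx.1 with h | h
    · rw [if_neg (by intro h'; linarith [h'.1])]
      refine (hasDerivAt_const x (G l)).congr_of_eventuallyEq ?_
      filter_upwards [Iio_mem_nhds h] with z hz
      have hz : z < l := hz
      rw [max_eq_left ((min_le_left _ _).trans hz.le)]
    · rcases lt_or_gt_of_ne hx.2 with h2 | h2
      · rw [if_pos ⟨h, h2⟩]
        refine (hG x).congr_of_eventuallyEq ?_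
        filter_upwards [Ioo_mem_nhds h h2] with z hz
        rw [min_eq_left hz.2.le, max_eq_right hz.1.le]
      · rw [if_neg (by intro h'; linarith [h'.2])]
        refine (hasDerivAt_const x (G u)).congr_of_eventuallyEq ?_
        filter_upwards [Ioi_mem_nhds h2] with z hz
        have hz : u < z := hz
        rw [min_eq_right hz.le, max_eq_right hlu]
  · have h1 : (fun x => if l < x ∧ x < u then g x else 0) = (Set.Ioo l u).indicator g := by
      ext x; simp [Set.indicator, Set.mem_Ioo]
    rw [h1, intervalIntegrable_iff]
    exact (intervalIntegrable_iff.1 (hg.intervalIntegrable a c)).indicator measurableSet_Ioo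

lemma shopCost (r b α l u y B : ℝ) (hb : b ≠ 0) (hl : 0 ≤ l) (hlu : l ≤ u) (huB : u ≤ B)
    (hy : 0 < y) (p : ℝ → ℝ)
    (hp : ∀ x, p x = if l < x ∧ x < u then α * Real.exp (r * x / b) else 0) :
    (∫ x in (0:ℝ)..y, (r * x + b) * p x) + ∫ x in y..B, r * y * p x
      = min y u * (α * b * Real.exp (r * u / b)) - min y l * (α * b * Real.exp (r * l / b)) := by
  have hE : ∀ x, HasDerivAt (fun x => Real.exp (r * x / b)) (Real.exp (r * x / b) * (r / b)) x := by
    intro x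
    have := (((hasDerivAt_id x).const_mul r).div_const b).exp
    simpa using this
  have e1 : ∀ x, (r * x + b) * p x
      = if l < x ∧ x < u then (r * x + b) * (α * Real.exp (r * x / b)) else 0 := by
    intro x; rw [hp]; split_ifs <;> simp
  have e2 : ∀ x, r * y * p x
      = if l < x ∧ x < u then r * y * (α * Real.exp (r * x / b)) else 0 := by
    intro x; rw [hp]; split_ifs <;> simp
  simp only [e1, e2]
  rw [clampInt (fun x => x * (α * b * Real.exp (r * x / b))) _ _ (by fun_prop) l u 0 y hlu,
    clampInt (fun x => y * (α * b * Real.exp (r * x / b))) _ _ (by fun_prop) l u y B hlu]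
  · have h0 : max l (min 0 u) = l := by
      rw [min_eq_left (hl.trans hlu), max_eq_left hl]
    have hB : max l (min B u) = u := by rw [min_eq_right huB, max_eq_right hlu]
    rw [h0, hB]
    rcases le_total y l with h | h
    · rw [min_eq_left (h.trans hlu), max_eq_left h, min_eq_left h]; ring
    · rcases le_total y u with h2 | h2
      · rw [min_eq_left h2, max_eq_right h, min_eq_right h]; ring
      · rw [min_eq_right h2, max_eq_right hlu, min_eq_right h]; ring
  · intro x
    refine (((hE x).const_mul (α * b)).const_mul y).congr_deriv ?_
    field_simp
  · intro x
    refine ((hasDerivAt_id x).mul ((hE x).const_mul (α * b))).congr_deriv ?_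
    simp only [id]
    field_simp
    ring

/-- for a piecewise-exponential strategy whose coefficients satisfy the
matching relations, the expected cost is linear in y, so the ratio is constant. -/
theorem msr_piecewise_exponential_constant_ratio
    (n : ℕ) (hn : 0 < n) (r b : ℕ → ℝ)
    (hr0 : 0 < r 0)
    (hrmono : ∀ j, j + 1 < n → r j < r (j + 1))
    (hbmono : ∀ j, j + 1 < n → b (j + 1) < b j)
    (hbn : 0 < b (n - 1))
    (B : ℝ) (hB : B = b (n - 1) / r 0)
    (d α : ℕ → ℝ) (p : ℕ → ℝ → ℝ)
    (hd0 : d 0 = B) (hdn : d n = 0) (hdmono : ∀ j < n, d (j + 1) ≤ d j)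
    (hα : ∀ j, 1 ≤ j → j < n →
      α j * b j * Real.exp (r j * d j / b j)
        = α (j - 1) * b (j - 1) * Real.exp (r (j - 1) * d j / b (j - 1)))
    (hp : ∀ j x, p j x =
      if d (j + 1) < x ∧ x < d j then α j * Real.exp (r j * x / b j) else 0) :
    ∀ y ∈ Set.Ioc (0 : ℝ) B,
      densCost n r b B p y = y * (α 0 * b 0 * Real.exp (r 0 / b 0 * B)) ∧
      densCost n r b B p y / (r 0 * y) = α 0 * (b 0 / r 0) * Real.exp (r 0 / b 0 * B) := by
  have hbpos : ∀ k, k < n → 0 < b (n - 1 - k) := by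
    intro k
    induction k with
    | zero => intro _; simpa using hbn
    | succ k ih =>
      intro hk
      have h1 := ih (by omega)
      have h2 := hbmono (n - 1 - (k + 1)) (by omega)
      rw [show n - 1 - (k + 1) + 1 = n - 1 - k by omega] at h2
      linarith
  have hb : ∀ j, j < n → 0 < b j := by
    intro j hj
    have := hbpos (n - 1 - j) (by omega)
    rwa [show n - 1 - (n - 1 - j) = j by omega] at this
  have hdB : ∀ j, j ≤ n → d j ≤ B := by
    intro j
    induction j with
    | zero => intro _; exact hd0.le
    | succ j ih => intro hj; exact (hdmono j (by omega)).trans (ih (by omega))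
  have hdpos' : ∀ k, k ≤ n → 0 ≤ d (n - k) := by
    intro k
    induction k with
    | zero => intro _; simp [hdn]
    | succ k ih =>
      intro hk
      have h2 := hdmono (n - (k + 1)) (by omega)
      rw [show n - (k + 1) + 1 = n - k by omega] at h2
      exact (ih (by omega)).trans h2
  have hdpos : ∀ j, j ≤ n → 0 ≤ d j := by
    intro j hj
    have := hdpos' (n - j) (by omega)
    rwa [show n - (n - j) = j by omega] at this
  rintro y ⟨hy, hyB⟩
  have key : ∀ k, k < n → ∑ j ∈ Finset.range (k + 1),
      ((∫ x in (0:ℝ)..y, (r j * x + b j) * p j x) + ∫ x in y..B, r j * y * p j x)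
      = y * (α 0 * b 0 * Real.exp (r 0 / b 0 * B))
        - min y (d (k + 1)) * (α k * b k * Real.exp (r k * d (k + 1) / b k)) := by
    intro k
    induction k with
    | zero =>
      intro hk
      rw [Finset.sum_range_one, shopCost (r 0) (b 0) (α 0) (d 1) (d 0) y B (hb 0 hk).ne'
        (hdpos 1 hk) (hdmono 0 hk) hd0.le hy (p 0) (hp 0), hd0, min_eq_left hyB,
        div_mul_eq_mul_div]
    | succ k ih =>
      intro hk
      have h := hα (k + 1) (by omega) hk
      rw [Nat.add_sub_cancel] at h
      rw [Finset.sum_range_succ, ih (by omega), shopCost (r (k + 1)) (b (k + 1)) (α (k + 1))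
        (d (k + 1 + 1)) (d (k + 1)) y B (hb _ hk).ne' (hdpos _ hk) (hdmono _ hk)
        (hdB _ hk.le) hy (p (k + 1)) (hp (k + 1)), h]
      ring
  have main : densCost n r b B p y = y * (α 0 * b 0 * Real.exp (r 0 / b 0 * B)) := by
    have h := key (n - 1) (by omega)
    rw [show n - 1 + 1 = n by omega, hdn, min_eq_right hy.le] at h
    rw [densCost, h]
    ring
  refine ⟨main, ?_⟩
  rw [main]
  have := hb 0 hn
  field_simp
end

section
/- Let B = d_1 > d_2 > ⋯ > d_n > d_{n+1} = 0 be strictly decreasing breakpoints, let α_1,…,α_n be reals, let p be the associated piecewise-exponential strategy, and suppose there is λ ∈ ℝ with C(p,y) = λ·r_1·y for every y ∈ (0,B]. Then α_j·b_j·e^{r_j·d_j/b_j} = α_{j−1}·b_{j−1}·e^{r_{j−1}·d_j/b_{j−1}} for every j = 2,…,n. -/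
open MeasureTheory Set

open Filter Topology intervalIntegral in
theorem msr_aux_deriv (r b B L y : ℝ) (p : ℝ → ℝ) (hpi : Integrable p) (s t : Set ℝ)
    [FTCFilter y (𝓝[s] y) (𝓝[t] y)] (hm : Measurable p)
    (hL : Tendsto p (𝓝[t] y ⊓ ae volume) (𝓝 L)) :
    HasDerivWithinAt (fun y => (∫ x in (0:ℝ)..y, (r * x + b) * p x) + ∫ x in y..B, r * y * p x)
      (b * L + r * ∫ x in y..B, p x) s y := by
  have hII : ∀ u v, IntervalIntegrable p volume u v := fun u v => hpi.intervalIntegrable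
  have hg : Continuous (fun x : ℝ => r * x + b) := by fun_prop
  have h1 : HasDerivWithinAt (fun y => ∫ x in (0:ℝ)..y, (r * x + b) * p x)
      ((r * y + b) * L) s y := by
    apply integral_hasDerivWithinAt_of_tendsto_ae_right (t := t)
    · exact (hII 0 y).continuousOn_mul hg.continuousOn
    · exact (hg.measurable.mul hm).stronglyMeasurable.stronglyMeasurableAtFilter
    · exact Tendsto.mul ((hg.tendsto y).mono_left (inf_le_left.trans nhdsWithin_le_nhds)) hL
  have h2 : HasDerivWithinAt (fun y => ∫ x in y..B, p x) (-L) s y :=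
    integral_hasDerivWithinAt_of_tendsto_ae_left (t := t) (hII y B)
      hm.stronglyMeasurable.stronglyMeasurableAtFilter hL
  have h3 : HasDerivWithinAt (fun y : ℝ => r * y) r s y := by
    simpa using ((hasDerivWithinAt_id y s).const_mul r)
  have h4 := h1.add (h3.mul h2)
  have hv : b * L + r * ∫ x in y..B, p x
      = (r * y + b) * L + ((r * ∫ x in y..B, p x) + r * y * -L) := by ring
  rw [hv]
  have hf : (fun y => (∫ x in (0:ℝ)..y, (r * x + b) * p x) + ∫ x in y..B, r * y * p x)
      = (fun y => ∫ x in (0:ℝ)..y, (r * x + b) * p x)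
        + (fun y => r * y) * fun y => ∫ x in y..B, p x := by
    funext z
    simp [intervalIntegral.integral_const_mul]
  rw [hf]
  exact h4

/-- if a piecewise-exponential strategy with strictly decreasing
breakpoints has expected cost λ·r₁·y for all y ∈ (0,B], then the coefficients
satisfy the matching relations. -/
theorem msr_alpha_relation
    (n : ℕ) (hn : 0 < n) (r b : ℕ → ℝ)
    (hr0 : 0 < r 0)
    (hrmono : ∀ j, j + 1 < n → r j < r (j + 1))
    (hbmono : ∀ j, j + 1 < n → b (j + 1) < b j)
    (hbn : 0 < b (n - 1))
    (B : ℝ) (hB : B = b (n - 1) / r 0)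
    (d α : ℕ → ℝ) (p : ℕ → ℝ → ℝ) (lam : ℝ)
    (hd0 : d 0 = B) (hdn : d n = 0) (hdmono : ∀ j < n, d (j + 1) < d j)
    (hp : ∀ j x, p j x =
      if d (j + 1) < x ∧ x < d j then α j * Real.exp (r j * x / b j) else 0)
    (hC : ∀ y ∈ Set.Ioc (0 : ℝ) B, densCost n r b B p y = lam * (r 0 * y)) :
    ∀ j, 1 ≤ j → j < n →
      α j * b j * Real.exp (r j * d j / b j)
        = α (j - 1) * b (j - 1) * Real.exp (r (j - 1) * d j / b (j - 1)) := by
  intro j hj1 hjn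
  obtain ⟨m, rfl⟩ : ∃ m, j = m + 1 := ⟨j - 1, by omega⟩
  simp only [Nat.add_sub_cancel]
  have hanti : ∀ k l, k ≤ l → l ≤ n → d l ≤ d k := by
    intro k l hkl
    induction l, hkl using Nat.le_induction with
    | base => intro _; exact le_rfl
    | succ l hl ih => intro h; exact (hdmono l (by omega)).le.trans (ih (by omega))
  have hpeq : ∀ k, p k = (Ioo (d (k + 1)) (d k)).indicator
      (fun x => α k * Real.exp (r k * x / b k)) := by
    intro k; funext x
    rw [hp, Set.indicator_apply]; rfl
  have hcont : ∀ k, Continuous (fun x => α k * Real.exp (r k * x / b k)) := by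
    intro k; fun_prop
  have hpm : ∀ k, Measurable (p k) := by
    intro k; rw [hpeq]; exact (hcont k).measurable.indicator measurableSet_Ioo
  have hpi : ∀ k, Integrable (p k) := by
    intro k
    rw [hpeq, integrable_indicator_iff measurableSet_Ioo]
    exact ((hcont k).continuousOn.integrableOn_Icc).mono_set Ioo_subset_Icc_self
  set y := d (m + 1) with hy
  have hylt : y < d m := hdmono m (by omega)
  have hygt : d (m + 1 + 1) < y := hdmono (m + 1) hjn
  have hy0 : 0 < y := by
    have := hanti (m + 2) n (by omega) le_rfl
    rw [hdn] at this; exact this.trans_lt hygt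
  have hyB : y < B := by
    have := hanti 0 m (by omega) (by omega)
    rw [hd0] at this; exact hylt.trans_le this
  -- general one-sided identity
  have key : ∀ (s t : Set ℝ) [intervalIntegral.FTCFilter y (nhdsWithin y s) (nhdsWithin y t)] (q : ℕ) (_ : q < n)
      (_ : UniqueDiffWithinAt ℝ s y)
      (_ : ∀ k < n, k ≠ q → p k =ᶠ[nhdsWithin y t ⊓ ae volume] fun _ => 0)
      (_ : p q =ᶠ[nhdsWithin y t ⊓ ae volume] fun x => α q * Real.exp (r q * x / b q)),
      b q * (α q * Real.exp (r q * y / b q)) + ∑ k ∈ Finset.range n, r k * ∫ x in y..B, p k x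
        = lam * r 0 := by
    intro s t _ q hq hu h0 h1
    have hD : HasDerivWithinAt (fun y => densCost n r b B p y)
        (∑ k ∈ Finset.range n, (b k * (if k = q then α q * Real.exp (r q * y / b q) else 0)
          + r k * ∫ x in y..B, p k x)) s y := by
      unfold densCost
      apply HasDerivWithinAt.fun_sum
      intro k hk
      refine msr_aux_deriv (r k) (b k) B _ y (p k) (hpi k) s t (hpm k) ?_
      by_cases hkq : k = q
      · subst hkq
        rw [if_pos rfl]
        exact (((hcont k).tendsto y).mono_left
          (inf_le_left.trans nhdsWithin_le_nhds)).congr' h1.symm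
      · rw [if_neg hkq]
        exact tendsto_const_nhds.congr' (h0 k (Finset.mem_range.1 hk) hkq).symm
    have hE : HasDerivWithinAt (fun y => densCost n r b B p y) (lam * r 0) s y := by
      have h5 : HasDerivAt (fun y : ℝ => lam * (r 0 * y)) (lam * r 0) y := by
        simpa using ((hasDerivAt_id y).const_mul (r 0)).const_mul lam
      refine (h5.congr_of_eventuallyEq ?_).hasDerivWithinAt
      filter_upwards [Ioo_mem_nhds hy0 hyB] with z hz
      exact hC z ⟨hz.1, hz.2.le⟩
    have := hu.eq_deriv _ hD hE
    rw [Finset.sum_add_distrib] at this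
    simpa [hq] using this
  have hL := key (Iic y) (Iic y) (m + 1) hjn (uniqueDiffOn_Iic y y self_mem_Iic) ?_ ?_
  · have hR := key (Ici y) (Ioi y) m (by omega) (uniqueDiffOn_Ici y y self_mem_Ici) ?_ ?_
    · linarith
    · intro k hk hkm
      apply Filter.EventuallyEq.filter_mono _ inf_le_left
      filter_upwards [self_mem_nhdsWithin, nhdsWithin_le_nhds (Iio_mem_nhds hylt)] with x hx hx2
      rw [hp, if_neg]
      rintro ⟨h1, h2⟩
      rcases lt_or_gt_of_ne hkm with h | h
      · exact absurd (hanti (k + 1) m (by omega) (by omega)) (not_le.2 (h1.trans hx2))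
      · exact absurd (hanti (m + 1) k (by omega) (by omega)) (not_le.2 (lt_trans hx h2))
    · apply Filter.EventuallyEq.filter_mono _ inf_le_left
      filter_upwards [self_mem_nhdsWithin, nhdsWithin_le_nhds (Iio_mem_nhds hylt)] with x hx hx2
      rw [hp, if_pos ⟨hx, hx2⟩]
  · intro k hk hkm
    apply Filter.EventuallyEq.filter_mono _ inf_le_left
    filter_upwards [self_mem_nhdsWithin, nhdsWithin_le_nhds (Ioi_mem_nhds hygt)] with x hx hx2
    rw [hp, if_neg]
    rintro ⟨h1, h2⟩
    rcases lt_or_gt_of_ne hkm with h | h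
    · exact absurd (hanti (k + 1) (m + 1) (by omega) (by omega)) (not_le.2 (lt_of_lt_of_le h1 hx))
    · exact absurd (hanti (m + 2) k (by omega) (by omega)) (not_le.2 (lt_trans hx2 h2))
  · have hne : ∀ᵐ x ∂(volume : Measure ℝ), x ≠ y := by
      simp [ae_iff]
    filter_upwards [Filter.mem_inf_of_left self_mem_nhdsWithin,
      Filter.mem_inf_of_left (nhdsWithin_le_nhds (Ioi_mem_nhds hygt)),
      Filter.mem_inf_of_right hne] with x hx hx2 hx3
    rw [hp, if_pos ⟨hx2, lt_of_le_of_ne hx hx3⟩]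
end

section
/- Let 0 < r_{n−1} < r_n, b_{n−1} > b_n > 0, α_{n−1} > 0 and d_{n−1} ∈ ℝ. Define α_n(d) = α_{n−1}·(b_{n−1}/b_n)·e^{(r_{n−1}/b_{n−1} − r_n/b_n)·d} and P_{n−1}(d) = α_n(d)·∫_0^d e^{r_n·x/b_n} dx + α_{n−1}·∫_d^{d_{n−1}} e^{r_{n−1}·x/b_{n−1}} dx. Then P_{n−1} is strictly concave on ℝ. -/
lemma exp_integral_aux (r b u v : ℝ) (hr : 0 < r) (hb : 0 < b) :
    (∫ x in u..v, Real.exp (r * x / b))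
      = (Real.exp (r / b * v) - Real.exp (r / b * u)) * (b / r) := by
  have hc : r / b ≠ 0 := (div_pos hr hb).ne'
  have h : ∀ x ∈ Set.uIcc u v,
      HasDerivAt (fun x : ℝ => Real.exp (r / b * x) * (b / r)) (Real.exp (r * x / b)) x := by
    intro x _
    have h1 := (((hasDerivAt_id x).const_mul (r / b)).exp).mul_const (b / r)
    refine h1.congr_deriv ?_
    have : r * x / b = r / b * x := by ring
    rw [this]
    simp only [id]
    field_simp
  rw [intervalIntegral.integral_eq_sub_of_hasDerivAt h
    (Continuous.intervalIntegrable (by fun_prop) _ _)]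
  ring

/-- the objective `P_{n-1}(d)` arising in the computation of the last
breakpoint `d_n` is strictly concave, where
`αₙ(d) = α_{n-1}·(b_{n-1}/b_n)·exp((r_{n-1}/b_{n-1} − r_n/b_n)·d)` and
`P_{n-1}(d) = αₙ(d)·∫_0^d exp(r_n·x/b_n) dx + α_{n-1}·∫_d^{d_{n-1}} exp(r_{n-1}·x/b_{n-1}) dx`. -/
theorem dn_objective_strictly_concave
    (r1 r2 b1 b2 alpha dprev : ℝ)
    (hr1 : 0 < r1) (hr12 : r1 < r2) (hb2 : 0 < b2) (hb12 : b2 < b1)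
    (halpha : 0 < alpha) :
    StrictConcaveOn ℝ Set.univ (fun d : ℝ =>
      alpha * (b1 / b2) * Real.exp ((r1 / b1 - r2 / b2) * d)
          * (∫ x in (0:ℝ)..d, Real.exp (r2 * x / b2))
        + alpha * ∫ x in d..dprev, Real.exp (r1 * x / b1)) := by
  have hb1 : 0 < b1 := hb2.trans hb12
  have hr2 : 0 < r2 := hr1.trans hr12
  have hp : r1 / b1 ≠ 0 := (div_pos hr1 hb1).ne'
  have hs : r1 / b1 - r2 / b2 ≠ 0 := by
    have : r1 / b1 < r2 / b2 := by
      rw [div_lt_div_iff₀ hb1 hb2]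
      nlinarith
    linarith
  have hA : 0 < alpha * (b1 / r1 - b1 / r2) := by
    have : b1 / r2 < b1 / r1 := div_lt_div_of_pos_left hb1 hr1 hr12
    exact mul_pos halpha (by linarith)
  have hB : 0 < alpha * (b1 / r2) := by positivity
  have key : ∀ d : ℝ, alpha * (b1 / b2) * Real.exp ((r1 / b1 - r2 / b2) * d)
          * (∫ x in (0:ℝ)..d, Real.exp (r2 * x / b2))
        + alpha * (∫ x in d..dprev, Real.exp (r1 * x / b1))
      = alpha * (b1 / r1) * Real.exp (r1 / b1 * dprev)
        - alpha * (b1 / r1 - b1 / r2) * Real.exp (r1 / b1 * d)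
        - alpha * (b1 / r2) * Real.exp ((r1 / b1 - r2 / b2) * d) := by
    intro d
    rw [exp_integral_aux r2 b2 0 d hr2 hb2, exp_integral_aux r1 b1 d dprev hr1 hb1]
    have e : Real.exp (r1 / b1 * d)
        = Real.exp ((r1 / b1 - r2 / b2) * d) * Real.exp (r2 / b2 * d) := by
      rw [← Real.exp_add]; ring_nf
    have hk : b1 / r2 = b1 / b2 * (b2 / r2) := by field_simp
    rw [e, hk, mul_zero, Real.exp_zero]
    ring
  simp only [key]
  have conv : ∀ c : ℝ, c ≠ 0 → ∀ x y s t : ℝ, x ≠ y → 0 < s → 0 < t → s + t = 1 →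
      Real.exp (c * (s * x + t * y)) < s * Real.exp (c * x) + t * Real.exp (c * y) := by
    intro c hc x y s t hxy hs ht hst
    have h := strictConvexOn_exp.2 (Set.mem_univ (c * x)) (Set.mem_univ (c * y))
      (fun h => hxy (mul_left_cancel₀ hc h)) hs ht hst
    simp only [smul_eq_mul] at h
    have e : c * (s * x + t * y) = s * (c * x) + t * (c * y) := by ring
    rw [e]; exact h
  refine ⟨convex_univ, ?_⟩
  intro x _ y _ hxy s t h0 h1 hst
  simp only [smul_eq_mul]
  have c1 := mul_lt_mul_of_pos_left (conv _ hp x y s t hxy h0 h1 hst) hA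
  have c2 := mul_lt_mul_of_pos_left (conv _ hs x y s t hxy h0 h1 hst) hB
  obtain rfl : t = 1 - s := by linarith
  linarith
end

section
/- Let 0 < r_{j−1} < r_j, b_{j−1} > b_j > 0, α_{j−1} > 0, D ≥ 0 and d_{j−1} ∈ ℝ. Define α_j(d) = α_{j−1}·(b_{j−1}/b_j)·e^{(r_{j−1}/b_{j−1} − r_j/b_j)·d} and P_{j−1}(d) = α_j(d)·( D + ∫_0^d e^{r_j·x/b_j} dx ) + α_{j−1}·∫_d^{d_{j−1}} e^{r_{j−1}·x/b_{j−1}} dx. If D·r_j/b_j ≥ 1, then the derivative of P_{j−1} is strictly negative at every d ∈ ℝ (so P_{j−1} is strictly decreasing); if D·r_j/b_j < 1, then P_{j−1} is strictly concave on ℝ. -/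
/-- the objective `P_{j-1}(d)` arising in the computation of the
breakpoint `d_j`, with accumulated constant `D ≥ 0`, is strictly decreasing (with
strictly negative derivative everywhere) when `D·r_j/b_j ≥ 1`, and strictly concave
when `D·r_j/b_j < 1`. Here `r1 = r_{j-1} < r_j = r2`, `b1 = b_{j-1} > b_j = b2`. -/
theorem dj_objective_quasiconcave
    (r1 r2 b1 b2 alpha D dprev : ℝ)
    (hr1 : 0 < r1) (hr12 : r1 < r2) (hb2 : 0 < b2) (hb12 : b2 < b1)
    (halpha : 0 < alpha) (hD : 0 ≤ D)
    (P : ℝ → ℝ)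
    (hP : ∀ d, P d =
      alpha * (b1 / b2) * Real.exp ((r1 / b1 - r2 / b2) * d)
          * (D + ∫ x in (0:ℝ)..d, Real.exp (r2 * x / b2))
        + alpha * ∫ x in d..dprev, Real.exp (r1 * x / b1)) :
    (1 ≤ D * r2 / b2 → (∀ d : ℝ, deriv P d < 0) ∧ StrictAnti P) ∧
    (D * r2 / b2 < 1 → StrictConcaveOn ℝ Set.univ P) := by
  have hb1 : 0 < b1 := hb2.trans hb12
  have hr2 : 0 < r2 := hr1.trans hr12
  have hI : ∀ c : ℝ, c ≠ 0 → ∀ u v : ℝ,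
      ∫ x in u..v, Real.exp (c * x) = (Real.exp (c * v) - Real.exp (c * u)) / c := by
    intro c hc u v
    rw [intervalIntegral.integral_eq_sub_of_hasDerivAt
      (f := fun x => Real.exp (c * x) / c)]
    · ring
    · intro x _
      have h := (((hasDerivAt_id' x).const_mul c).exp).div_const c
      rwa [mul_one, mul_div_assoc, div_self hc, mul_one] at h
    · apply Continuous.intervalIntegrable
      fun_prop
  obtain ⟨p, hp⟩ : ∃ p, p = r1 / b1 := ⟨_, rfl⟩
  obtain ⟨q, hq⟩ : ∃ q, q = r2 / b2 := ⟨_, rfl⟩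
  have hp0 : 0 < p := by rw [hp]; positivity
  have hq0 : 0 < q := by rw [hq]; positivity
  have hpq : p < q := by
    rw [hp, hq, div_lt_div_iff₀ hb1 hb2]
    nlinarith
  obtain ⟨A, hA⟩ : ∃ A, A = alpha * (b1 / b2) * (D - 1 / q) := ⟨_, rfl⟩
  obtain ⟨B, hB⟩ : ∃ B, B = alpha * (b1 / b2) / q - alpha / p := ⟨_, rfl⟩
  have hB0 : B < 0 := by
    have : B = alpha * b1 * (1 / r2 - 1 / r1) := by
      rw [hB, hp, hq]; field_simp
    rw [this]
    have := one_div_lt_one_div_of_lt hr1 hr12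
    exact mul_neg_of_pos_of_neg (by positivity) (by linarith)
  have hPf : P = fun d => A * Real.exp ((p - q) * d) + B * Real.exp (p * d)
      + alpha * Real.exp (p * dprev) / p := by
    funext d
    have e1 : ∀ x : ℝ, r2 * x / b2 = q * x := fun x => by rw [hq]; ring
    have e2 : ∀ x : ℝ, r1 * x / b1 = p * x := fun x => by rw [hp]; ring
    rw [hP d]
    simp only [e1, e2]
    rw [hI q hq0.ne', hI p hp0.ne', ← hp, ← hq, hA, hB]
    have e3 : Real.exp (p * d) = Real.exp ((p - q) * d) * Real.exp (q * d) := by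
      rw [← Real.exp_add]; ring_nf
    rw [e3, mul_zero, Real.exp_zero]
    ring
  have hE : ∀ c x : ℝ, HasDerivAt (fun d => Real.exp (c * d)) (c * Real.exp (c * x)) x := by
    intro c x
    have h := ((hasDerivAt_id' x).const_mul c).exp
    convert h using 1
    ring
  have hd : deriv P = fun d => A * ((p - q) * Real.exp ((p - q) * d))
      + B * (p * Real.exp (p * d)) := by
    funext d
    rw [hPf]
    exact ((((hE (p - q) d).const_mul A).add ((hE p d).const_mul B)).add_const _).deriv
  have hk : 0 < alpha * (b1 / b2) := by positivity
  have hDq : D * r2 / b2 = D * q := by rw [hq]; ring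
  rw [hDq]
  constructor
  · intro h
    have hA0 : 0 ≤ A := by
      rw [hA]
      have : 1 / q ≤ D := by rwa [div_le_iff₀ hq0]
      exact mul_nonneg hk.le (by linarith)
    have hneg : ∀ d : ℝ, deriv P d < 0 := by
      intro d
      rw [hd]
      have h1 : A * ((p - q) * Real.exp ((p - q) * d)) ≤ 0 :=
        mul_nonpos_of_nonneg_of_nonpos hA0
          (mul_nonpos_of_nonpos_of_nonneg (by linarith) (Real.exp_pos _).le)
      have h2 : B * (p * Real.exp (p * d)) < 0 :=
        mul_neg_of_neg_of_pos hB0 (by positivity)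
      show _ + _ < _
      linarith
    exact ⟨hneg, strictAnti_of_deriv_neg hneg⟩
  · intro h
    have hA0 : A < 0 := by
      rw [hA]
      have : D < 1 / q := by rwa [lt_div_iff₀ hq0]
      exact mul_neg_of_pos_of_neg hk (by linarith)
    apply StrictAnti.strictConcaveOn_univ_of_deriv
    · rw [hPf]; fun_prop
    · rw [hd]
      intro x y hxy
      have h1 : Real.exp ((p - q) * y) < Real.exp ((p - q) * x) :=
        Real.exp_lt_exp.2 (by nlinarith)
      have h2 : Real.exp (p * x) < Real.exp (p * y) :=
        Real.exp_lt_exp.2 (by nlinarith)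
      have h3 : 0 < A * (p - q) := mul_pos_of_neg_of_neg hA0 (by linarith)
      have h4 : B * p < 0 := mul_neg_of_neg_of_pos hB0 hp0
      have h5 := mul_lt_mul_of_pos_left h1 h3
      have h6 := mul_lt_mul_of_neg_left h2 h4
      show _ + _ < _ + _
      linarith
end

section
/- Let 0 < r_{n−1} < r_n, b_{n−1} > b_n > 0, α_{n−1} > 0 and d_{n−1} ∈ ℝ, and let P_{n−1}(d) = α_n(d)·∫_0^d e^{r_n·x/b_n} dx + α_{n−1}·∫_d^{d_{n−1}} e^{r_{n−1}·x/b_{n−1}} dx with α_n(d) = α_{n−1}·(b_{n−1}/b_n)·e^{(r_{n−1}/b_{n−1} − r_n/b_n)·d}. Then the point d* = (b_n/r_n)·ln( (b_{n−1}·r_n − b_n·r_{n−1}) / (b_n·(r_n − r_{n−1})) ) is well defined (the argument of the logarithm is > 1), satisfies d* > 0, the derivative of P_{n−1} vanishes at d*, and d* is the unique global maximizer of P_{n−1} on ℝ. -/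
theorem aux_int (r b u v : ℝ) (hr : 0 < r) (hb : 0 < b) :
    (∫ x in u..v, Real.exp (r * x / b)) = b / r * (Real.exp (r / b * v) - Real.exp (r / b * u)) := by
  have h : ∀ x ∈ Set.uIcc u v,
      HasDerivAt (fun x => b / r * Real.exp (r / b * x)) (Real.exp (r * x / b)) x := by
    intro x _
    have h1 := ((((hasDerivAt_id x).const_mul (r / b)).exp).const_mul (b / r))
    refine h1.congr_deriv ?_
    have : r * x / b = r / b * x := by ring
    rw [this]
    simp only [id]
    field_simp
  rw [intervalIntegral.integral_eq_sub_of_hasDerivAt h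
    (Continuous.intervalIntegrable (by fun_prop) _ _)]
  ring

/-- the point
`d* = (b_n/r_n)·log((b_{n-1}·r_n − b_n·r_{n-1})/(b_n·(r_n − r_{n-1})))`
is well defined (the argument of the logarithm exceeds 1), positive, a critical
point of the objective `P_{n-1}`, and its unique global maximizer.
Here `r1 = r_{n-1} < r_n = r2`, `b1 = b_{n-1} > b_n = b2`. -/
theorem dn_unique_maximizer
    (r1 r2 b1 b2 alpha dprev : ℝ)
    (hr1 : 0 < r1) (hr12 : r1 < r2) (hb2 : 0 < b2) (hb12 : b2 < b1)
    (halpha : 0 < alpha)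
    (P : ℝ → ℝ)
    (hP : ∀ d, P d =
      alpha * (b1 / b2) * Real.exp ((r1 / b1 - r2 / b2) * d)
          * (∫ x in (0:ℝ)..d, Real.exp (r2 * x / b2))
        + alpha * ∫ x in d..dprev, Real.exp (r1 * x / b1))
    (dstar : ℝ)
    (hdstar : dstar = b2 / r2 * Real.log ((b1 * r2 - b2 * r1) / (b2 * (r2 - r1)))) :
    1 < (b1 * r2 - b2 * r1) / (b2 * (r2 - r1)) ∧
    0 < dstar ∧
    deriv P dstar = 0 ∧
    ∀ d : ℝ, d ≠ dstar → P d < P dstar := by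
  have hr2 : 0 < r2 := hr1.trans hr12
  have hb1 : 0 < b1 := hb2.trans hb12
  have hden : 0 < b2 * (r2 - r1) := mul_pos hb2 (sub_pos.2 hr12)
  have hL : 1 < (b1 * r2 - b2 * r1) / (b2 * (r2 - r1)) := by
    rw [one_lt_div hden]
    nlinarith
  have hexp : Real.exp (r2 / b2 * dstar) = (b1 * r2 - b2 * r1) / (b2 * (r2 - r1)) := by
    have : r2 / b2 * dstar = Real.log ((b1 * r2 - b2 * r1) / (b2 * (r2 - r1))) := by
      rw [hdstar]; field_simp
    rw [this, Real.exp_log (by linarith)]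
  have hPf : P = fun d => alpha * (b1 / b2) * Real.exp ((r1 / b1 - r2 / b2) * d)
      * (b2 / r2 * (Real.exp (r2 / b2 * d) - 1))
      + alpha * (b1 / r1 * (Real.exp (r1 / b1 * dprev) - Real.exp (r1 / b1 * d))) := by
    funext d
    rw [hP, aux_int r2 b2 _ _ hr2 hb2, aux_int r1 b1 _ _ hr1 hb1]
    simp
  have hder : ∀ d, HasDerivAt P (alpha * ((r2 - r1) / r2) * Real.exp ((r1 / b1 - r2 / b2) * d)
      * (Real.exp (r2 / b2 * dstar) - Real.exp (r2 / b2 * d))) d := by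
    intro d
    rw [hPf, hexp]
    have e1 := ((hasDerivAt_id d).const_mul (r1 / b1 - r2 / b2)).exp.const_mul (alpha * (b1 / b2))
    have e2 := (((hasDerivAt_id d).const_mul (r2 / b2)).exp.sub_const 1).const_mul (b2 / r2)
    have e3 := ((((hasDerivAt_id d).const_mul (r1 / b1)).exp.const_sub
      (Real.exp (r1 / b1 * dprev))).const_mul (b1 / r1)).const_mul alpha
    refine ((e1.mul e2).add e3).congr_deriv ?_
    simp only [id]
    have h : Real.exp (r1 / b1 * d)
        = Real.exp ((r1 / b1 - r2 / b2) * d) * Real.exp (r2 / b2 * d) := by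
      rw [← Real.exp_add]; congr 1; ring
    rw [h]
    generalize Real.exp ((r1 / b1 - r2 / b2) * d) = A
    generalize Real.exp (r2 / b2 * d) = B
    have : r2 - r1 ≠ 0 := (sub_pos.2 hr12).ne'
    field_simp
    ring
  have hcont : Continuous P := continuous_iff_continuousAt.2 fun d => (hder d).continuousAt
  have hq : 0 < r2 / b2 := div_pos hr2 hb2
  have hpos : ∀ d, 0 < alpha * ((r2 - r1) / r2) * Real.exp ((r1 / b1 - r2 / b2) * d) := fun d =>
    mul_pos (mul_pos halpha (div_pos (sub_pos.2 hr12) hr2)) (Real.exp_pos _)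
  refine ⟨hL, ?_, ?_, ?_⟩
  · rw [hdstar]
    exact mul_pos (div_pos hb2 hr2) (Real.log_pos hL)
  · rw [(hder dstar).deriv]; simp
  · intro d hd
    rcases lt_or_gt_of_ne hd with h | h
    · have hm : StrictMonoOn P (Set.Iic dstar) := by
        apply strictMonoOn_of_deriv_pos (convex_Iic _) hcont.continuousOn
        intro x hx
        rw [interior_Iic] at hx
        rw [(hder x).deriv]
        exact mul_pos (hpos x) (sub_pos.2 (Real.exp_lt_exp.2 (mul_lt_mul_of_pos_left hx hq)))
      exact hm h.le (le_refl dstar) h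
    · have hm : StrictAntiOn P (Set.Ici dstar) := by
        apply strictAntiOn_of_deriv_neg (convex_Ici _) hcont.continuousOn
        intro x hx
        rw [interior_Ici] at hx
        rw [(hder x).deriv]
        exact mul_neg_of_pos_of_neg (hpos x)
          (sub_neg.2 (Real.exp_lt_exp.2 (mul_lt_mul_of_pos_left hx hq)))
      exact hm (le_refl dstar) h.le h
end

section
/- Let μ be a mixed strategy for MSR, let y_0 ∈ (0,B] and let δ ∈ (0, y_0). If λ_μ(y) > λ_μ(y_0) for every y ∈ (y_0−δ, y_0), then there exists a shop j with μ_j((y_0−δ, y_0]) > 0. -/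
open MeasureTheory Set

/-- `λ_μ(y)`: the gap between the worst-case ratio of `μ` and its ratio at `y`. -/
noncomputable def lamGap (n : ℕ) (r b : ℕ → ℝ) (B : ℝ) (μ : ℕ → Measure ℝ) (y : ℝ) : ℝ :=
  (⨆ t : Set.Ioc (0 : ℝ) B, expCost n r b μ (t : ℝ) / (r 0 * (t : ℝ)))
    - expCost n r b μ y / (r 0 * y)

theorem msrCost_integrable (r b B y : ℝ) (ν : Measure ℝ) [IsFiniteMeasure ν]
    (hν : ν (Set.Icc 0 B)ᶜ = 0) : Integrable (fun x => msrCost r b x y) ν := by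
  have hm : Measurable (fun x => msrCost r b x y) := by
    unfold msrCost
    exact Measurable.ite measurableSet_Ioi measurable_const (by fun_prop)
  refine Integrable.of_bound hm.aestronglyMeasurable (|r| * |y| + |r| * B + |b|) ?_
  have : ∀ᵐ x ∂ν, x ∈ Set.Icc 0 B := by
    rw [ae_iff]; exact hν
  filter_upwards [this] with x hx
  have hB : 0 ≤ B := hx.1.trans hx.2
  have h1 : 0 ≤ |r| * B := by positivity
  have h2 : 0 ≤ |r| * |y| := by positivity
  have h3 := abs_nonneg b
  unfold msrCost
  rw [Real.norm_eq_abs]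
  split_ifs
  · rw [abs_mul]; linarith
  · have h4 := abs_add_le (r * x) b
    have h5 : |r * x| ≤ |r| * B := by
      rw [abs_mul, abs_of_nonneg hx.1]
      exact mul_le_mul_of_nonneg_left hx.2 (abs_nonneg r)
    linarith

/-- if the gap `lamGap` is strictly larger than `lamGap y0` throughout
`(y0 - δ, y0)`, then some shop carries positive probability on `(y0 - δ, y0]`. -/
theorem msr_gap_forces_mass_left
    (n : ℕ) (hn : 0 < n) (r b : ℕ → ℝ)
    (hr0 : 0 < r 0)
    (hrmono : ∀ j, j + 1 < n → r j < r (j + 1))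
    (hbmono : ∀ j, j + 1 < n → b (j + 1) < b j)
    (hbn : 0 < b (n - 1))
    (B : ℝ) (hB : B = b (n - 1) / r 0)
    (μ : ℕ → Measure ℝ) (hμ : IsMixed n B μ)
    (y0 δ : ℝ) (hy0 : y0 ∈ Set.Ioc (0 : ℝ) B) (hδ0 : 0 < δ) (hδ : δ < y0)
    (h : ∀ y ∈ Set.Ioo (y0 - δ) y0, lamGap n r b B μ y0 < lamGap n r b B μ y) :
    ∃ j < n, 0 < μ j (Set.Ioc (y0 - δ) y0) := by
  by_contra hcon
  push Not at hcon
  obtain ⟨hfin, hsupp, -⟩ := hμ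
  have hr : ∀ j, j < n → 0 < r j := by
    intro j
    induction j with
    | zero => intro _; exact hr0
    | succ k ih => intro hk; exact (ih (by omega)).trans (hrmono k hk)
  have hb : ∀ k j, j + k + 1 = n → 0 < b j := by
    intro k
    induction k with
    | zero =>
      intro j hj
      have : j = n - 1 := by omega
      rw [this]; exact hbn
    | succ k ih =>
      intro j hj
      exact (ih (j + 1) (by omega)).trans (hbmono j (by omega))
  have hy0p := hy0.1
  obtain ⟨y, hy⟩ : ∃ y, y = y0 - δ / 2 := ⟨_, rfl⟩
  have hyp : 0 < y := by linarith
  have hlt := h y ⟨by linarith, by linarith⟩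
  unfold lamGap at hlt
  have key : y * expCost n r b μ y0 ≤ y0 * expCost n r b μ y := by
    unfold expCost
    rw [Finset.mul_sum, Finset.mul_sum]
    refine Finset.sum_le_sum fun j hj => ?_
    have hjn : j < n := Finset.mem_range.mp hj
    have := hfin j
    rw [← integral_const_mul, ← integral_const_mul]
    refine integral_mono_ae ((msrCost_integrable _ _ B _ _ (hsupp j)).const_mul _)
      ((msrCost_integrable _ _ B _ _ (hsupp j)).const_mul _) ?_
    have h1 : ∀ᵐ x ∂(μ j), x ∈ Set.Icc 0 B := by
      rw [ae_iff]; exact hsupp j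
    have h2 : ∀ᵐ x ∂(μ j), x ∉ Set.Ioc (y0 - δ) y0 :=
      measure_eq_zero_iff_ae_notMem.mp (nonpos_iff_eq_zero.mp (hcon j hjn))
    filter_upwards [h1, h2] with x hx hx2
    have hrj := hr j hjn
    have hbj := hb (n - 1 - j) j (by omega)
    have hx0 := hx.1
    unfold msrCost
    by_cases hxy : y0 < x
    · rw [if_pos hxy, if_pos (by linarith)]
      apply le_of_eq; ring
    · have hx3 : x ≤ y0 - δ := by
        by_contra hc
        exact hx2 ⟨not_le.mp hc, not_lt.mp hxy⟩
      rw [if_neg hxy, if_neg (by linarith)]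
      exact mul_le_mul_of_nonneg_right (by linarith) (by positivity)
  have : expCost n r b μ y0 / (r 0 * y0) ≤ expCost n r b μ y / (r 0 * y) := by
    rw [div_le_div_iff₀ (by positivity) (by positivity)]
    nlinarith [mul_le_mul_of_nonneg_left key hr0.le]
  linarith
end

section
/- Let μ be a mixed strategy for MSR and let 0 < a < b ≤ B. If λ_μ(y) > λ_μ(a) for every y ∈ (a,b), then there exists a shop j with μ_j([0,a]) > 0. -/
open MeasureTheory Set

lemma msr_aux (r b B a y : ℝ) (hr : 0 < r) (hb : 0 < b) (ν : Measure ℝ) [IsFiniteMeasure ν]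
    (hν : ν (Set.Icc 0 B)ᶜ = 0) (ha : 0 < a) (hay : a < y) (hy : r * (y - a) ≤ b)
    (h0 : ν (Set.Icc 0 a) = 0) :
    ∫ x, msrCost r b x a ∂ν = a * (ν.real univ * r) ∧
    y * (ν.real univ * r) ≤ ∫ x, msrCost r b x y ∂ν := by
  have h1 : ∀ᵐ x ∂ν, x ∈ Set.Icc 0 B := by
    rw [ae_iff]; exact hν
  have h2 : ∀ᵐ x ∂ν, x ∉ Set.Icc 0 a := by
    rw [ae_iff]; simpa only [not_not, Set.setOf_mem_eq] using h0
  constructor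
  · have : ∫ x, msrCost r b x a ∂ν = ∫ x, r * a ∂ν := by
      apply integral_congr_ae
      filter_upwards [h1, h2] with x hx1 hx2
      have : a < x := by
        by_contra hc
        exact hx2 ⟨hx1.1, not_lt.1 hc⟩
      simp [msrCost, this]
    rw [this, integral_const, smul_eq_mul]; ring
  · have hm : Measurable (fun x => msrCost r b x y) := by
      unfold msrCost
      exact Measurable.ite (measurableSet_lt measurable_const measurable_id) (by fun_prop) (by fun_prop)
    have hi : Integrable (fun x => msrCost r b x y) ν := by
      refine Integrable.of_bound hm.aestronglyMeasurable (r * y + b) ?_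
      filter_upwards [h1] with x hx
      have hx0 := hx.1
      have p1 : 0 < r * y := mul_pos hr (ha.trans hay)
      have p2 : 0 ≤ r * x := by positivity
      unfold msrCost
      split_ifs with hc
      · rw [Real.norm_eq_abs, abs_of_pos p1]; linarith
      · rw [Real.norm_eq_abs, abs_of_nonneg (by linarith)]; nlinarith
    have : ∫ x, r * y ∂ν ≤ ∫ x, msrCost r b x y ∂ν := by
      apply integral_mono_ae (integrable_const _) hi
      filter_upwards [h1, h2] with x hx1 hx2
      have : a < x := by
        by_contra hc
        exact hx2 ⟨hx1.1, not_lt.1 hc⟩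
      simp only [msrCost]
      split_ifs with hc
      · exact le_rfl
      · nlinarith
    rw [integral_const, smul_eq_mul] at this
    linarith

/-- if the gap `lamGap` is strictly larger than `lamGap a₀` throughout
`(a₀, b₀)`, then some shop carries positive probability on `[0, a₀]`. -/
theorem msr_gap_forces_mass_initial
    (n : ℕ) (hn : 0 < n) (r b : ℕ → ℝ)
    (hr0 : 0 < r 0)
    (hrmono : ∀ j, j + 1 < n → r j < r (j + 1))
    (hbmono : ∀ j, j + 1 < n → b (j + 1) < b j)
    (hbn : 0 < b (n - 1))
    (B : ℝ) (hB : B = b (n - 1) / r 0)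
    (μ : ℕ → Measure ℝ) (hμ : IsMixed n B μ)
    (a₀ b₀ : ℝ) (ha : 0 < a₀) (hab : a₀ < b₀) (hbB : b₀ ≤ B)
    (h : ∀ y ∈ Set.Ioo a₀ b₀, lamGap n r b B μ a₀ < lamGap n r b B μ y) :
    ∃ j < n, 0 < μ j (Set.Icc 0 a₀) := by
  by_contra hcon
  push Not at hcon
  have hz : ∀ j < n, μ j (Set.Icc 0 a₀) = 0 := fun j hj => le_antisymm (hcon j hj) bot_le
  have hrpos : ∀ j < n, 0 < r j := by
    intro j
    induction j with
    | zero => intro _; exact hr0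
    | succ k ih => intro hk; exact (ih (by omega)).trans (hrmono k hk)
  have hstep : ∀ k j, j + k + 1 = n → r j ≤ r (n - 1) ∧ b (n - 1) ≤ b j := by
    intro k
    induction k with
    | zero =>
      intro j hj
      have : j = n - 1 := by omega
      subst this; exact ⟨le_rfl, le_rfl⟩
    | succ k ih =>
      intro j hj
      have h1 := ih (j + 1) (by omega)
      exact ⟨(hrmono j (by omega)).le.trans h1.1, h1.2.trans (hbmono j (by omega)).le⟩
  have hR := hrpos (n - 1) (by omega)
  obtain ⟨y, hy1, hy2, hy3⟩ : ∃ y, a₀ < y ∧ y < b₀ ∧ r (n - 1) * (y - a₀) ≤ b (n - 1) := by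
    have hp : 0 < b (n - 1) / r (n - 1) := by positivity
    refine ⟨min ((a₀ + b₀) / 2) (a₀ + b (n - 1) / r (n - 1)), ?_, ?_, ?_⟩
    · apply lt_min <;> linarith
    · exact (min_le_left _ _).trans_lt (by linarith)
    · have h1 := min_le_right ((a₀ + b₀) / 2) (a₀ + b (n - 1) / r (n - 1))
      calc _ ≤ r (n - 1) * (b (n - 1) / r (n - 1)) := by gcongr; linarith
        _ = _ := by field_simp
  have key : ∀ j ∈ Finset.range n,
      ∫ x, msrCost (r j) (b j) x a₀ ∂(μ j) = a₀ * ((μ j).real univ * r j) ∧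
      y * ((μ j).real univ * r j) ≤ ∫ x, msrCost (r j) (b j) x y ∂(μ j) := by
    intro j hj
    rw [Finset.mem_range] at hj
    have := hμ.1 j
    have hs := hstep (n - 1 - j) j (by omega)
    refine msr_aux (r j) (b j) B a₀ y (hrpos j hj) (by linarith) (μ j) (hμ.2.1 j) ha hy1 ?_ (hz j hj)
    nlinarith
  have e1 : expCost n r b μ a₀ = a₀ * ∑ j ∈ Finset.range n, (μ j).real univ * r j := by
    unfold expCost
    rw [Finset.mul_sum]
    exact Finset.sum_congr rfl fun j hj => (key j hj).1
  have e2 : y * ∑ j ∈ Finset.range n, (μ j).real univ * r j ≤ expCost n r b μ y := by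
    unfold expCost
    rw [Finset.mul_sum]
    exact Finset.sum_le_sum fun j hj => (key j hj).2
  have h3 := h y ⟨hy1, hy2⟩
  unfold lamGap at h3
  have hy0 : 0 < y := ha.trans hy1
  have h4 : expCost n r b μ a₀ / (r 0 * a₀) ≤ expCost n r b μ y / (r 0 * y) := by
    rw [e1, div_le_div_iff₀ (by positivity) (by positivity)]
    have := mul_le_mul_of_nonneg_right e2 (by positivity : 0 ≤ r 0 * a₀)
    linarith
  linarith
end

section
/- Let μ be a mixed strategy for MSR, let ε > 0 and y_0 ∈ (0,B], and set δ = ε·r_1·y_0² / (4·(r_n·y_0 + b_1 + ε·r_1·y_0)). Then 0 < δ < y_0/4, and for every y ∈ (y_0−δ, y_0) one has C(μ,y)/(r_1·y) − C(μ,y_0)/(r_1·y_0) ≤ ε; consequently λ_μ(y) ≥ λ_μ(y_0) − ε for every y ∈ (y_0−δ, y_0). -/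
open MeasureTheory Set

lemma msr_aux_chain (n : ℕ) (f : ℕ → ℝ) (h : ∀ j, j + 1 < n → f j ≤ f (j + 1)) :
    ∀ j, j < n → ∀ i, i ≤ j → f i ≤ f j := by
  intro j
  induction j with
  | zero => intro _ i hi; obtain rfl : i = 0 := by omega
            exact le_rfl
  | succ k ih =>
    intro hk i hi
    rcases Nat.lt_or_ge i (k + 1) with h1 | h1
    · exact (ih (by omega) i (by omega)).trans (h k hk)
    · obtain rfl : i = k + 1 := by omega
      exact le_rfl

lemma msr_aux_meas (r b y : ℝ) : Measurable (fun x => msrCost r b x y) := by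
  unfold msrCost
  exact Measurable.ite measurableSet_Ioi (by fun_prop) (by fun_prop)

lemma msr_aux_bound (r b x y R D : ℝ) (hr : 0 ≤ r) (hb : 0 ≤ b) (hrR : r ≤ R) (hbD : b ≤ D)
    (hx : 0 ≤ x) (hy : 0 ≤ y) : 0 ≤ msrCost r b x y ∧ msrCost r b x y ≤ R * y + D := by
  unfold msrCost
  have h1 : r * y ≤ R * y := by gcongr
  split_ifs with h
  · exact ⟨by positivity, by linarith⟩
  · have : r * x ≤ r * y := by gcongr; linarith
    exact ⟨by positivity, by linarith⟩

lemma msr_aux_mono (r b x y z : ℝ) (hr : 0 ≤ r) (hb : 0 ≤ b) (hyz : y ≤ z) :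
    msrCost r b x y ≤ msrCost r b x z := by
  unfold msrCost
  split_ifs with h h' h'
  · gcongr
  · have : r * y ≤ r * x := by gcongr
    linarith
  · linarith
  · exact le_rfl

/-- quantitative left lower-semicontinuity of the normalized cost:
with `δ = ε·r₁·y₀² / (4·(rₙ·y₀ + b₁ + ε·r₁·y₀))` one has `0 < δ < y₀/4` and the
ratio at any `y ∈ (y₀ − δ, y₀)` exceeds the ratio at `y₀` by at most `ε`. -/
theorem msr_ratio_left_lsc
    (n : ℕ) (hn : 0 < n) (r b : ℕ → ℝ)
    (hr0 : 0 < r 0)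
    (hrmono : ∀ j, j + 1 < n → r j < r (j + 1))
    (hbmono : ∀ j, j + 1 < n → b (j + 1) < b j)
    (hbn : 0 < b (n - 1))
    (B : ℝ) (hB : B = b (n - 1) / r 0)
    (μ : ℕ → Measure ℝ) (hμ : IsMixed n B μ)
    (ε y0 : ℝ) (hε : 0 < ε) (hy0 : y0 ∈ Set.Ioc (0 : ℝ) B)
    (δ : ℝ) (hδ : δ = ε * r 0 * y0 ^ 2 / (4 * (r (n - 1) * y0 + b 0 + ε * r 0 * y0))) :
    0 < δ ∧ δ < y0 / 4 ∧
    ∀ y ∈ Set.Ioo (y0 - δ) y0,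
      expCost n r b μ y / (r 0 * y) - expCost n r b μ y0 / (r 0 * y0) ≤ ε ∧
      lamGap n r b B μ y0 - ε ≤ lamGap n r b B μ y := by
  have hrj : ∀ j, j < n → r 0 ≤ r j := fun j hj =>
    msr_aux_chain n r (fun j h => (hrmono j h).le) j hj 0 (Nat.zero_le _)
  have hrn : ∀ j, j < n → r j ≤ r (n - 1) := fun j hj =>
    msr_aux_chain n r (fun j h => (hrmono j h).le) (n - 1) (by omega) j (by omega)
  have hb' : ∀ j, j + 1 < n → (fun j => - b j) j ≤ (fun j => - b j) (j + 1) :=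
    fun j h => neg_le_neg (hbmono j h).le
  have hbj : ∀ j, j < n → b j ≤ b 0 := fun j hj =>
    neg_le_neg_iff.1 (msr_aux_chain n _ hb' j hj 0 (Nat.zero_le _))
  have hbp : ∀ j, j < n → 0 < b j := fun j hj =>
    hbn.trans_le (neg_le_neg_iff.1 (msr_aux_chain n _ hb' (n - 1) (by omega) j (by omega)))
  have hb0 := hbp 0 hn
  have hR : 0 < r (n - 1) := hr0.trans_le (hrj _ (by omega))
  obtain ⟨hy0p, hy0B⟩ := hy0
  obtain ⟨hfin, hsupp, hsum⟩ := hμ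
  set K := r (n - 1) * y0 + b 0 with hK
  have hKp : 0 < K := by positivity
  have he : 0 < ε * r 0 * y0 := by positivity
  have hδp : 0 < δ := by rw [hδ]; positivity
  have hδe : δ * (4 * (K + ε * r 0 * y0)) = ε * r 0 * y0 ^ 2 := by
    rw [hδ]; field_simp
  have hδ4 : δ < y0 / 4 := by
    by_contra hc
    push Not at hc
    have : y0 / 4 * (4 * (K + ε * r 0 * y0)) ≤ δ * (4 * (K + ε * r 0 * y0)) := by gcongr
    nlinarith [mul_pos hy0p hKp]
  have hae : ∀ j, ∀ᵐ x ∂(μ j), 0 ≤ x := by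
    intro j
    have : ∀ᵐ x ∂(μ j), x ∈ Set.Icc 0 B := hsupp j
    filter_upwards [this] with x hx using hx.1
  have hint : ∀ j, j < n → ∀ y, 0 ≤ y →
      Integrable (fun x => msrCost (r j) (b j) x y) (μ j) := by
    intro j hj y hy
    have := hfin j
    refine Integrable.of_bound (msr_aux_meas _ _ _).aestronglyMeasurable
      (r (n - 1) * y + b 0) ?_
    filter_upwards [hae j] with x hx
    have := msr_aux_bound (r j) (b j) x y _ _ (hr0.le.trans (hrj j hj)) (hbp j hj).le
      (hrn j hj) (hbj j hj) hx hy
    rw [Real.norm_of_nonneg this.1]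
    exact this.2
  have hCK : expCost n r b μ y0 ≤ K := by
    have : ∀ j ∈ Finset.range n, ∫ x, msrCost (r j) (b j) x y0 ∂(μ j)
        ≤ (μ j (Set.Icc 0 B)).toReal * K := by
      intro j hj
      have hj := Finset.mem_range.1 hj
      have := hfin j
      have huniv : μ j (Set.Icc 0 B) = μ j Set.univ :=
        measure_congr (by
          have : ∀ᵐ x ∂(μ j), x ∈ Set.Icc 0 B := hsupp j
          exact Filter.eventuallyEq_univ.2 this)
      calc ∫ x, msrCost (r j) (b j) x y0 ∂(μ j) ≤ ∫ x, K ∂(μ j) := by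
            refine integral_mono_ae (hint j hj y0 hy0p.le) (integrable_const _) ?_
            filter_upwards [hae j] with x hx
            exact (msr_aux_bound (r j) (b j) x y0 _ _ (hr0.le.trans (hrj j hj)) (hbp j hj).le
              (hrn j hj) (hbj j hj) hx hy0p.le).2
        _ = _ := by rw [integral_const, huniv, smul_eq_mul]; rfl
    calc expCost n r b μ y0 ≤ _ := Finset.sum_le_sum this
      _ = K := by rw [← Finset.sum_mul, hsum, one_mul]
  refine ⟨hδp, hδ4, ?_⟩
  rintro y ⟨hy1, hy2⟩
  have hyp : 3 / 4 * y0 < y := by linarith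
  have hyp0 : 0 < y := by linarith
  have hmono : expCost n r b μ y ≤ expCost n r b μ y0 := by
    refine Finset.sum_le_sum fun j hj => ?_
    have hj := Finset.mem_range.1 hj
    refine integral_mono (hint j hj y hyp0.le) (hint j hj y0 hy0p.le) fun x => ?_
    exact msr_aux_mono _ _ _ _ _ (hr0.le.trans (hrj j hj)) (hbp j hj).le hy2.le
  have main : expCost n r b μ y / (r 0 * y) - expCost n r b μ y0 / (r 0 * y0) ≤ ε := by
    have h1 : expCost n r b μ y / (r 0 * y) ≤ expCost n r b μ y0 / (r 0 * y) := by gcongr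
    have h2 : expCost n r b μ y0 / (r 0 * y) - expCost n r b μ y0 / (r 0 * y0)
        = expCost n r b μ y0 * (y0 - y) / (r 0 * y * y0) := by
      field_simp
    have h3 : expCost n r b μ y0 * (y0 - y) / (r 0 * y * y0) ≤ ε := by
      rw [div_le_iff₀ (by positivity)]
      have h4 : expCost n r b μ y0 * (y0 - y) ≤ K * δ := by
        calc _ ≤ K * (y0 - y) := mul_le_mul_of_nonneg_right hCK (by linarith)
          _ ≤ K * δ := by gcongr; linarith
      have h5 : 3 / 4 * (ε * r 0 * y0 * y0) ≤ ε * (r 0 * y * y0) := by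
        nlinarith [mul_pos he hy0p, mul_le_mul_of_nonneg_left hyp.le he.le]
      nlinarith [mul_pos hδp he, mul_pos he hy0p]
    linarith
  refine ⟨main, ?_⟩
  unfold lamGap
  linarith
end

section
/- Let T > 0, let f, g : ℝ → ℝ be measurable functions with 0 ≤ f(t) ≤ T and 0 ≤ g(t) ≤ T for all t, let x, x' ∈ ℝ and ε > 0, and suppose ∫_{x−ε}^{x} f(t) dt > 0 and ∫_{x'}^{x'+ε} g(t) dt > 0. Then there exist x_1, x_2 ∈ ℝ and ε_0 > 0 such that (x_1, x_1+ε_0) ⊆ (x−ε, x), (x_2, x_2+ε_0) ⊆ (x', x'+ε), and ∫_0^{ε_0} min{ f(x_1+θ), g(x_2+θ) } dθ > 0. -/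
/-- overlap lemma. From two bounded nonnegative measurable functions
with positive integral over two given intervals, one can extract two translated
subintervals of equal length on which the pointwise minimum of the correspondingly
shifted functions has positive integral. -/
theorem overlap_of_pos_integrals
    (T : ℝ) (hT : 0 < T) (f g : ℝ → ℝ)
    (hfm : Measurable f) (hgm : Measurable g)
    (hf0 : ∀ t, 0 ≤ f t) (hfT : ∀ t, f t ≤ T)
    (hg0 : ∀ t, 0 ≤ g t) (hgT : ∀ t, g t ≤ T)
    (x x' ε : ℝ) (hε : 0 < ε)
    (hfI : 0 < ∫ t in (x - ε)..x, f t)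
    (hgI : 0 < ∫ t in x'..(x' + ε), g t) :
    ∃ x1 x2 ε0 : ℝ, 0 < ε0 ∧
      Set.Ioo x1 (x1 + ε0) ⊆ Set.Ioo (x - ε) x ∧
      Set.Ioo x2 (x2 + ε0) ⊆ Set.Ioo x' (x' + ε) ∧
      0 < ∫ θ in (0:ℝ)..ε0, min (f (x1 + θ)) (g (x2 + θ)) := by
  classical
  have bdd : ∀ (h : ℝ → ℝ) (a b : ℝ), Measurable h → (∀ t, 0 ≤ h t) → (∀ t, h t ≤ T) →
      IntervalIntegrable h MeasureTheory.volume a b := by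
    intro h a b hm h0 hT'
    refine (intervalIntegrable_const (c := T)).mono_fun hm.aestronglyMeasurable ?_
    refine Filter.Eventually.of_forall fun t => ?_
    simp only [Real.norm_eq_abs]
    rw [abs_of_nonneg (h0 t), abs_of_pos hT]
    exact hT' t
  rw [intervalIntegral.integral_pos_iff_support_of_nonneg_ae
    (Filter.Eventually.of_forall hf0) (bdd f _ _ hfm hf0 hfT)] at hfI
  rw [intervalIntegral.integral_pos_iff_support_of_nonneg_ae
    (Filter.Eventually.of_forall hg0) (bdd g _ _ hgm hg0 hgT)] at hgI
  obtain ⟨-, hA⟩ := hfI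
  obtain ⟨-, hB⟩ := hgI
  have mA : MeasurableSet (Function.support f ∩ Set.Ioc (x - ε) x) :=
    (measurableSet_support hfm).inter measurableSet_Ioc
  have mB : MeasurableSet (Function.support g ∩ Set.Ioc x' (x' + ε)) :=
    (measurableSet_support hgm).inter measurableSet_Ioc
  set A := Function.support f ∩ Set.Ioc (x - ε) x with hAdef
  set B := Function.support g ∩ Set.Ioc x' (x' + ε) with hBdef
  obtain ⟨s, hs⟩ : ∃ s : ℝ, 0 < MeasureTheory.volume {z : ℝ | z ∈ A ∧ z + s ∈ B} := by
    by_contra! hcon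
    have mp := MeasureTheory.measurePreserving_prod_add
      (MeasureTheory.volume : MeasureTheory.Measure ℝ) (MeasureTheory.volume : MeasureTheory.Measure ℝ)
    have h1 := mp.measure_preimage (mA.prod mB).nullMeasurableSet
    have m2 := mp.measurable (mA.prod mB)
    rw [MeasureTheory.Measure.prod_prod, MeasureTheory.Measure.prod_apply_symm m2] at h1
    have h2 : ∀ s : ℝ, MeasureTheory.volume ((fun z : ℝ => (z, s)) ⁻¹'
        ((fun z : ℝ × ℝ => (z.1, z.1 + z.2)) ⁻¹' A ×ˢ B)) = 0 := fun s =>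
      le_antisymm (hcon s) (zero_le)
    simp only [h2, MeasureTheory.lintegral_zero] at h1
    exact (ENNReal.mul_pos hA.ne' hB.ne').ne h1
  set a := max (x - ε) (x' - s) with ha
  set b := min x (x' + ε - s) with hb
  have ha1 : x - ε ≤ a := le_max_left _ _
  have ha2 : x' - s ≤ a := le_max_right _ _
  have hb1 : b ≤ x := min_le_left _ _
  have hb2 : b ≤ x' + ε - s := min_le_right _ _
  have hsub : {z : ℝ | z ∈ A ∧ z + s ∈ B} ⊆
      Function.support (fun z => min (f z) (g (z + s))) ∩ Set.Ioc a b := by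
    rintro z ⟨⟨hz1, hz2, hz3⟩, hz4, hz5, hz6⟩
    refine ⟨?_, max_lt hz2 (by linarith), le_min hz3 (by linarith)⟩
    have p1 := lt_of_le_of_ne (hf0 z) (Ne.symm hz1)
    have p2 := lt_of_le_of_ne (hg0 (z + s)) (Ne.symm hz4)
    exact (lt_min p1 p2).ne'
  have hab : a < b := by
    obtain ⟨z, hz⟩ := MeasureTheory.nonempty_of_measure_ne_zero hs.ne'
    exact (hsub hz).2.1.trans_le (hsub hz).2.2
  refine ⟨a, a + s, b - a, by linarith, ?_, ?_, ?_⟩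
  · exact Set.Ioo_subset_Ioo ha1 (by linarith)
  · exact Set.Ioo_subset_Ioo (by linarith) (by linarith)
  · have e : ∫ θ in (0:ℝ)..(b - a), min (f (a + θ)) (g (a + s + θ)) =
        ∫ z in a..b, min (f z) (g (z + s)) := by
      have := intervalIntegral.integral_comp_add_left (a := 0) (b := b - a)
        (fun z => min (f z) (g (z + s))) a
      simp only [add_zero, add_sub_cancel] at this
      rw [← this]
      simp only [add_right_comm]
    rw [e, intervalIntegral.integral_pos_iff_support_of_nonneg_ae
      (Filter.Eventually.of_forall fun z => le_min (hf0 z) (hg0 _))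
      (bdd (fun z => min (f z) (g (z + s))) _ _ (hfm.min (hgm.comp (measurable_id.add_const s)))
        (fun z => le_min (hf0 z) (hg0 _)) (fun z => (min_le_left _ _).trans (hfT z)))]
    exact ⟨hab, hs.trans_le (MeasureTheory.measure_mono hsub)⟩
end

section
/- Single-shop ski rental with entry fee a ≥ 0, renting rate 1 and buying price b > 0: let p_0 = a/((a+b)·e − b) and p(x) = e^{x/b} / ( b·(e − b/(a+b)) ) for x ∈ (0,b]. Then (i) p_0 + ∫_0^b p(x) dx = 1, and (ii) for every y ∈ (0,b], the expected cost C(y) = p_0·(a+b) + ∫_0^y (a + x + b)·p(x) dx + ∫_y^b (a + y)·p(x) dx satisfies C(y)/(a+y) = e/(e − b/(a+b)); i.e. this mixed strategy achieves the constant competitive ratio e/(e − b/(a+b)). -/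
/-- single-shop ski rental with entry fee `a ≥ 0`, renting rate `1`
and buying price `b > 0`. The mixed strategy with probability mass
`p₀ = a/((a+b)·e − b)` of buying at time `0` and density
`p(x) = exp(x/b)/(b·(e − b/(a+b)))` on `(0, b]` is a probability distribution and
achieves the constant competitive ratio `e/(e − b/(a+b))`. -/
theorem single_shop_entry_fee_ratio
    (a b : ℝ) (ha : 0 ≤ a) (hb : 0 < b)
    (p0 : ℝ) (hp0 : p0 = a / ((a + b) * Real.exp 1 - b))
    (p : ℝ → ℝ) (hp : ∀ x, p x = Real.exp (x / b) / (b * (Real.exp 1 - b / (a + b)))) :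
    p0 + (∫ x in (0:ℝ)..b, p x) = 1 ∧
    ∀ y ∈ Set.Ioc (0:ℝ) b,
      (p0 * (a + b) + (∫ x in (0:ℝ)..y, (a + x + b) * p x)
          + ∫ x in y..b, (a + y) * p x) / (a + y)
        = Real.exp 1 / (Real.exp 1 - b / (a + b)) := by
  have he : (1:ℝ) < Real.exp 1 := by
    have := Real.add_one_lt_exp (one_ne_zero : (1:ℝ) ≠ 0)
    linarith
  have hab : 0 < a + b := by linarith
  have hD : 0 < (a + b) * Real.exp 1 - b := by nlinarith
  have hK : Real.exp 1 - b / (a + b) = ((a + b) * Real.exp 1 - b) / (a + b) := by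
    field_simp
  have hp' : p = fun x => Real.exp (x / b) / (b * (Real.exp 1 - b / (a + b))) := funext hp
  have hpc : Continuous p := by
    rw [hp']
    exact (Real.continuous_exp.comp (continuous_id.div_const b)).div_const _
  have hE : ∀ x : ℝ, HasDerivAt (fun x => Real.exp (x / b)) (Real.exp (x / b) * (1 / b)) x :=
    fun x => ((hasDerivAt_id x).div_const b).exp
  have h1 : ∀ u v : ℝ, (∫ x in u..v, p x) =
      (a + b) / ((a + b) * Real.exp 1 - b) * (Real.exp (v / b) - Real.exp (u / b)) := by
    intro u v
    rw [intervalIntegral.integral_eq_sub_of_hasDerivAt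
      (f := fun x => (a + b) / ((a + b) * Real.exp 1 - b) * Real.exp (x / b)) _
      (hpc.intervalIntegrable _ _)]
    · ring
    · intro x _
      refine ((hE x).const_mul _).congr_deriv ?_
      rw [hp, hK]
      field_simp
  have h2 : ∀ u v : ℝ, (∫ x in u..v, (a + x + b) * p x) =
      (a + b) / ((a + b) * Real.exp 1 - b) *
        ((a + v) * Real.exp (v / b) - (a + u) * Real.exp (u / b)) := by
    intro u v
    rw [intervalIntegral.integral_eq_sub_of_hasDerivAt
      (f := fun x => (a + b) / ((a + b) * Real.exp 1 - b) * ((a + x) * Real.exp (x / b))) _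
      (Continuous.intervalIntegrable (by fun_prop) _ _)]
    · ring
    · intro x _
      refine ((((hasDerivAt_id x).const_add a).mul (hE x)).const_mul _).congr_deriv ?_
      rw [hp, hK]
      simp only [id]
      field_simp
      ring
  constructor
  · rw [h1, hp0, div_self hb.ne', zero_div, Real.exp_zero]
    field_simp
    ring
  · rintro y ⟨hy, -⟩
    have hay : 0 < a + y := by linarith
    rw [intervalIntegral.integral_const_mul, h1, h2, hp0, hK, div_self hb.ne', zero_div,
      Real.exp_zero]
    field_simp
    ring
end

section
/- In the MSR-S setting, any strategy which includes switching from one shop to another and continuing renting is dominated: for every pure action ψ with k ≥ 2 shops whose last switching time x_{k−1} is strictly smaller than its buying time x, there exists a pure action ψ' with the same buying time x in which every switching time (if any) equals x, such that cost(ψ', y) ≤ cost(ψ, y) for every stopping time y > 0. -/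
/-- A pure action in MSR-S / MSR-ES, given by `k ≥ 1` shops `j 0, …, j (k-1)`,
switching times `x 1 ≤ ⋯ ≤ x (k-1)` (with `x 0 = 0`), and buying time `x k`:
the consumer rents in shop `j t` during `[x t, x (t+1))` and buys in shop
`j (k-1)` at time `x k`. -/
def ValidAction (n k : ℕ) (j : ℕ → ℕ) (x : ℕ → ℝ) : Prop :=
  1 ≤ k ∧ (∀ t < k, j t < n) ∧ x 0 = 0 ∧ (∀ t < k, x t ≤ x (t + 1))

/-- Cost of the pure action `(k, j, x)` in MSR-S against stopping time `y`:
switching costs incurred at times `x t ≤ y`, renting charges up to time `y`,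
and the buying price if `y ≥ x k`. -/
noncomputable def msrsCost (r b : ℕ → ℝ) (c : ℕ → ℕ → ℝ) (k : ℕ)
    (j : ℕ → ℕ) (x : ℕ → ℝ) (y : ℝ) : ℝ :=
  (∑ t ∈ Finset.Ico 1 k, if x t ≤ y then c (j (t - 1)) (j t) else 0)
    + (∑ t ∈ Finset.range k, r (j t) * (min y (x (t + 1)) - min y (x t)))
    + (if x k ≤ y then b (j (k - 1)) else 0)

/-- in MSR-S, any strategy which switches shops strictly before the
buying time is dominated by one all of whose switches (if any) occur exactly at
the buying time. -/
theorem msrs_switch_only_at_buying_time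
    (n : ℕ) (hn : 0 < n) (r b : ℕ → ℝ) (c : ℕ → ℕ → ℝ)
    (hr0 : 0 < r 0)
    (hrmono : ∀ i, i + 1 < n → r i < r (i + 1))
    (hbmono : ∀ i, i + 1 < n → b (i + 1) < b i)
    (hbn : 0 < b (n - 1))
    (hc : ∀ i i', 0 ≤ c i i')
    (k : ℕ) (j : ℕ → ℕ) (x : ℕ → ℝ)
    (hval : ValidAction n k j x) (hk : 2 ≤ k) (hswitch : x (k - 1) < x k) :
    ∃ (k' : ℕ) (j' : ℕ → ℕ) (x' : ℕ → ℝ),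
      ValidAction n k' j' x' ∧
      x' k' = x k ∧
      (∀ t, 1 ≤ t → t < k' → x' t = x k) ∧
      ∀ y : ℝ, 0 < y → msrsCost r b c k' j' x' y ≤ msrsCost r b c k j x y := by
  obtain ⟨hk1, hj, hx0, hx⟩ := hval
  obtain ⟨m, hm, hmin⟩ := Finset.exists_min_image (Finset.range k) (fun t => r (j t))
    ⟨0, Finset.mem_range.2 (by omega)⟩
  have hmk : m < k := Finset.mem_range.1 hm
  have hmono : ∀ d t, t + d = k → x t ≤ x k := by
    intro d
    induction d with
    | zero => intro t h; simp at h; rw [h]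
    | succ d ih =>
      intro t h
      exact (hx t (by omega)).trans (ih (t + 1) (by omega))
  have hle : ∀ t, t ≤ k → x t ≤ x k := fun t ht => hmono (k - t) t (by omega)
  have hxk : 0 ≤ x k := hx0 ▸ hle 0 (by omega)
  refine ⟨k - m, fun t => j (m + t), fun t => if t = 0 then 0 else x k, ⟨by omega, ?_, by simp, ?_⟩,
    ?_, ?_, ?_⟩
  · intro t ht
    exact hj _ (by omega)
  · intro t ht
    by_cases h : t = 0 <;> simp [h, hxk]
  · simp; omega
  · intro t h1 _
    simp; omega
  · intro y hy
    unfold msrsCost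
    have hB : (if (if k - m = 0 then (0:ℝ) else x k) ≤ y then b (j (m + (k - m - 1))) else 0)
        = if x k ≤ y then b (j (k - 1)) else 0 := by
      rw [if_neg (by omega : ¬ (k - m = 0)), show m + (k - m - 1) = k - 1 by omega]
    have hR : (∑ t ∈ Finset.range (k - m), r (j (m + t)) *
          (min y (if t + 1 = 0 then 0 else x k) - min y (if t = 0 then 0 else x k)))
        ≤ ∑ t ∈ Finset.range k, r (j t) * (min y (x (t + 1)) - min y (x t)) := by
      have e1 : (∑ t ∈ Finset.range (k - m), r (j (m + t)) *
          (min y (if t + 1 = 0 then 0 else x k) - min y (if t = 0 then 0 else x k)))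
          = r (j m) * (min y (x k) - min y (x 0)) := by
        rw [Finset.sum_eq_single 0]
        · simp [hx0]
        · intro t _ h
          simp [h]
        · intro h
          exact absurd (Finset.mem_range.2 (by omega)) h
      rw [e1, ← Finset.sum_range_sub (fun t => min y (x t)) k, Finset.mul_sum]
      refine Finset.sum_le_sum fun t ht => ?_
      refine mul_le_mul_of_nonneg_right (hmin t ht) ?_
      exact sub_nonneg.2 (min_le_min_left _ (hx t (Finset.mem_range.1 ht)))
    have hC : (∑ t ∈ Finset.Ico 1 (k - m), if (if t = 0 then (0:ℝ) else x k) ≤ y then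
          c (j (m + (t - 1))) (j (m + t)) else 0)
        ≤ ∑ t ∈ Finset.Ico 1 k, if x t ≤ y then c (j (t - 1)) (j t) else 0 := by
      have e2 : (∑ t ∈ Finset.Ico 1 (k - m), if (if t = 0 then (0:ℝ) else x k) ≤ y then
          c (j (m + (t - 1))) (j (m + t)) else 0)
          = ∑ t ∈ Finset.Ico (1 + m) k, if x k ≤ y then c (j (t - 1)) (j t) else 0 := by
        have h := Finset.sum_Ico_add (fun t => if x k ≤ y then c (j (t - 1)) (j t) else 0)
          1 (k - m) m
        rw [show k - m + m = k by omega] at h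
        rw [← h]
        refine Finset.sum_congr rfl fun t ht => ?_
        have h1 := (Finset.mem_Ico.1 ht).1
        rw [if_neg (by omega : ¬ t = 0), show m + (t - 1) = m + t - 1 by omega]
      rw [e2]
      calc _ ≤ ∑ t ∈ Finset.Ico (1 + m) k, (if x t ≤ y then c (j (t - 1)) (j t) else 0) := by
            refine Finset.sum_le_sum fun t ht => ?_
            have h1 := hle t (Finset.mem_Ico.1 ht).2.le
            have h2 := hc (j (t - 1)) (j t)
            split_ifs <;> linarith
        _ ≤ _ := by
            refine Finset.sum_le_sum_of_subset_of_nonneg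
              (Finset.Ico_subset_Ico (by omega) le_rfl) fun t _ _ => ?_
            have h2 := hc (j (t - 1)) (j t)
            split_ifs <;> linarith
    exact add_le_add (add_le_add hC hR) hB.le
end

section
/- In the MSR-ES setting: (i) for every y ≥ B, min_{j} min( a_j + r_j·y, a_j + b_j ) = A, and for every pure action ψ and every y ≥ B, cost(ψ,y) ≤ cost(ψ,∞), where cost(ψ,∞) denotes the total cost when nature never stops (all entry fees, all renting charges up to the buying time, and the buying price); thus any strategy y ∈ [B,∞) of nature is dominated by never stopping. (ii) For every pure action ψ whose buying time x exceeds B, there exists a pure action ψ' with buying time at most B such that cost(ψ', y) ≤ cost(ψ, y) for every y with 0 < y < B, and cost(ψ',∞) ≤ cost(ψ,∞); thus any consumer action buying after time B is dominated. -/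
/-- Cost of a pure action in MSR-ES against stopping time `y`: entry fees of all
shops entered no later than `y`, renting charges up to time `y`, and the buying
price if `y ≥ x k`. -/
noncomputable def esCost (a r b : ℕ → ℝ) (k : ℕ) (j : ℕ → ℕ) (x : ℕ → ℝ) (y : ℝ) : ℝ :=
  a (j 0) + (∑ t ∈ Finset.Ico 1 k, if x t ≤ y then a (j t) else 0)
    + (∑ t ∈ Finset.range k, r (j t) * (min y (x (t + 1)) - min y (x t)))
    + (if x k ≤ y then b (j (k - 1)) else 0)

/-- Total cost of a pure action in MSR-ES when nature never stops: all entry fees,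
all renting charges up to the buying time, and the buying price. -/
noncomputable def esCostInf (a r b : ℕ → ℝ) (k : ℕ) (j : ℕ → ℕ) (x : ℕ → ℝ) : ℝ :=
  (∑ t ∈ Finset.range k, a (j t))
    + (∑ t ∈ Finset.range k, r (j t) * (x (t + 1) - x t))
    + b (j (k - 1))

theorem msr_min_diff (c u v : ℝ) (h : u ≤ v) : min c v - min c u ≤ v - u := by
  rcases min_cases c v with h1 | h1 <;> rcases min_cases c u with h2 | h2 <;> linarith

theorem msr_min_diff_nonneg (c u v : ℝ) (h : u ≤ v) : 0 ≤ min c v - min c u :=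
  sub_nonneg.2 (min_le_min_left c h)

theorem msr_min_min (y B u : ℝ) (h : y < B) : min y (min B u) = min y u := by
  rw [← min_assoc, min_eq_left h.le]

theorem msr_min_le_iff (y B u : ℝ) (h : y < B) : min B u ≤ y ↔ u ≤ y := by
  rw [min_le_iff]
  constructor
  · rintro (h1 | h1)
    · linarith
    · exact h1
  · exact Or.inr

/-- in MSR-ES, (i) for every `y ≥ B` the offline optimum is the
constant `A` and every stopping time `y ≥ B` of nature is dominated by never
stopping; (ii) every consumer action buying after time `B` is dominated by an
action buying no later than `B`. -/
theorem msres_dominated_strategies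
    (n : ℕ) (hn : 0 < n) (a r b : ℕ → ℝ)
    (ha : ∀ j < n, 0 ≤ a j) (hr : ∀ j < n, 0 < r j) (hb : ∀ j < n, 0 < b j)
    (hrmono : ∀ i, i + 1 < n → r i ≤ r (i + 1))
    (hab : ∀ i < n, ∀ j < n, a i < a j + b j)
    (hba : ∀ i < n, ∀ j < n, b i ≤ a j + b j)
    (hdom : ∀ i j, i < j → j < n → a j < a i ∨ a j + b j < a i + b i)
    (A : ℝ) (hA : IsLeast {v : ℝ | ∃ j < n, v = a j + b j} A)
    (B : ℝ) (hB : IsLeast {t : ℝ | 0 ≤ t ∧ ∀ i < n, A ≤ a i + t * r i} B) :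
    ((∀ y : ℝ, B ≤ y →
        IsLeast {v : ℝ | ∃ j < n, v = min (a j + r j * y) (a j + b j)} A) ∧
      (∀ (k : ℕ) (j : ℕ → ℕ) (x : ℕ → ℝ), ValidAction n k j x →
        ∀ y : ℝ, B ≤ y → esCost a r b k j x y ≤ esCostInf a r b k j x)) ∧
    (∀ (k : ℕ) (j : ℕ → ℕ) (x : ℕ → ℝ), ValidAction n k j x → B < x k →
      ∃ (k' : ℕ) (j' : ℕ → ℕ) (x' : ℕ → ℝ),
        ValidAction n k' j' x' ∧ x' k' ≤ B ∧
        (∀ y : ℝ, 0 < y → y < B → esCost a r b k' j' x' y ≤ esCost a r b k j x y) ∧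
        esCostInf a r b k' j' x' ≤ esCostInf a r b k j x) := by
  obtain ⟨hB0, hBi⟩ := hB.1
  obtain ⟨s, hs, hAs⟩ := hA.1
  have hAle : ∀ j < n, A ≤ a j + b j := fun j hj => hA.2 ⟨j, hj, rfl⟩
  refine ⟨⟨?_, ?_⟩, ?_⟩
  · intro y hy
    have key : ∀ j < n, A ≤ a j + r j * y := by
      intro j hj
      have h1 := hBi j hj
      have h2 := mul_le_mul_of_nonneg_left hy (hr j hj).le
      linarith [mul_comm B (r j)]
    refine ⟨⟨s, hs, ?_⟩, ?_⟩
    · rw [← hAs, min_eq_right (key s hs)]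
    · rintro v ⟨j, hj, rfl⟩
      exact le_min (key j hj) (hAle j hj)
  · rintro k j x ⟨hk, hj, hx0, hx⟩ y hy
    unfold esCost esCostInf
    have e1 : ∑ t ∈ Finset.range k, a (j t) = a (j 0) + ∑ t ∈ Finset.Ico 1 k, a (j t) := by
      rw [Finset.range_eq_Ico, Finset.sum_eq_sum_Ico_succ_bot (by omega)]
    have e2 : (∑ t ∈ Finset.Ico 1 k, if x t ≤ y then a (j t) else 0)
        ≤ ∑ t ∈ Finset.Ico 1 k, a (j t) := by
      apply Finset.sum_le_sum
      intro t ht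
      have := ha _ (hj t (Finset.mem_Ico.1 ht).2)
      split_ifs <;> linarith
    have e3 : (∑ t ∈ Finset.range k, r (j t) * (min y (x (t + 1)) - min y (x t)))
        ≤ ∑ t ∈ Finset.range k, r (j t) * (x (t + 1) - x t) := by
      apply Finset.sum_le_sum
      intro t ht
      have ht := Finset.mem_range.1 ht
      exact mul_le_mul_of_nonneg_left (msr_min_diff _ _ _ (hx t ht)) (hr _ (hj t ht)).le
    have e4 : (if x k ≤ y then b (j (k - 1)) else 0) ≤ b (j (k - 1)) := by
      have := hb _ (hj (k - 1) (by omega))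
      split_ifs <;> linarith
    linarith
  · rintro k j x ⟨hk, hj, hx0, hx⟩ hBk
    have hex : ∃ p, B < x p := ⟨k, hBk⟩
    classical
    obtain ⟨p, hp, hpmin⟩ : ∃ p, B < x p ∧ ∀ t < p, ¬ B < x t :=
      ⟨Nat.find hex, Nat.find_spec hex, fun t ht => Nat.find_min hex ht⟩
    have hpk : p ≤ k := by
      by_contra h
      exact hpmin k (by omega) hBk
    have hp0 : 1 ≤ p := by
      rcases Nat.eq_zero_or_pos p with h | h
      · subst h; linarith
      · exact h
    have hrent : ∀ q ≤ k, (∑ t ∈ Finset.range q, r (j t) * (min B (x (t + 1)) - min B (x t)))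
        ≤ ∑ t ∈ Finset.range q, r (j t) * (x (t + 1) - x t) := by
      intro q hq
      apply Finset.sum_le_sum
      intro t ht
      have ht := Finset.mem_range.1 ht
      exact mul_le_mul_of_nonneg_left (msr_min_diff _ _ _ (hx t (by omega)))
        (hr _ (hj t (by omega))).le
    rcases hpk.eq_or_lt with rfl | hlt
    · refine ⟨p, j, fun t => min B (x t), ⟨hk, hj, ?_, ?_⟩, min_le_left _ _, ?_, ?_⟩
      · simp [hx0, hB0]
      · intro t ht
        exact min_le_min_left _ (hx t ht)
      · intro y hy0 hyB
        simp only [esCost, msr_min_min y B _ hyB, msr_min_le_iff y B _ hyB, le_refl]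
      · have := hrent p le_rfl
        simp only [esCostInf]
        linarith
    · have hxp : B < x (p + 1) := lt_of_lt_of_le hp (hx p hlt)
      have hup : ∀ t < p, Function.update j p s t = j t := fun t ht =>
        Function.update_of_ne (by omega) _ _
      refine ⟨p + 1, Function.update j p s, fun t => min B (x t), ⟨by omega, ?_, ?_, ?_⟩,
        min_le_left _ _, ?_, ?_⟩
      · intro t ht
        rcases Nat.lt_succ_iff_lt_or_eq.1 ht with h | h
        · rw [hup t h]; exact hj t (by omega)
        · subst h; simpa using hs
      · simp [hx0, hB0]
      · intro t ht
        exact min_le_min_left _ (hx t (by omega))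
      · intro y hy0 hyB
        simp only [esCost, msr_min_min y B _ hyB, msr_min_le_iff y B _ hyB]
        rw [Finset.sum_Ico_succ_top hp0, Finset.sum_range_succ, hup 0 (by omega),
          if_neg (by linarith : ¬ x p ≤ y), if_neg (by linarith : ¬ x (p + 1) ≤ y),
          if_neg (by linarith : ¬ x k ≤ y), min_eq_left (by linarith : y ≤ x p),
          min_eq_left (by linarith : y ≤ x (p + 1))]
        have e1 : (∑ t ∈ Finset.Ico 1 p, if x t ≤ y then a (Function.update j p s t) else 0)
            ≤ ∑ t ∈ Finset.Ico 1 k, if x t ≤ y then a (j t) else 0 := by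
          rw [Finset.sum_congr rfl (g := fun t => if x t ≤ y then a (j t) else 0)
            (fun t ht => by rw [hup t (Finset.mem_Ico.1 ht).2])]
          apply Finset.sum_le_sum_of_subset_of_nonneg
          · exact Finset.Ico_subset_Ico_right hpk
          · intro t ht _
            have := ha _ (hj t (Finset.mem_Ico.1 ht).2)
            split_ifs <;> linarith
        have e2 : (∑ t ∈ Finset.range p,
              r (Function.update j p s t) * (min y (x (t + 1)) - min y (x t)))
            ≤ ∑ t ∈ Finset.range k, r (j t) * (min y (x (t + 1)) - min y (x t)) := by
          rw [Finset.sum_congr rfl (g := fun t => r (j t) * (min y (x (t + 1)) - min y (x t)))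
            (fun t ht => by rw [hup t (Finset.mem_range.1 ht)])]
          apply Finset.sum_le_sum_of_subset_of_nonneg
          · exact Finset.range_subset_range.2 hpk
          · intro t ht _
            have ht := Finset.mem_range.1 ht
            exact mul_nonneg (hr _ (hj t ht)).le (msr_min_diff_nonneg _ _ _ (hx t ht))
        linarith
      · simp only [esCostInf]
        rw [Finset.sum_range_succ, Finset.sum_range_succ, Nat.add_sub_cancel,
          Function.update_self, min_eq_left hp.le, min_eq_left hxp.le]
        have g1 : ∑ t ∈ Finset.range p, a (Function.update j p s t)
            = ∑ t ∈ Finset.range p, a (j t) :=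
          Finset.sum_congr rfl (fun t ht => by rw [hup t (Finset.mem_range.1 ht)])
        have g2 : ∑ t ∈ Finset.range p,
              r (Function.update j p s t) * (min B (x (t + 1)) - min B (x t))
            = ∑ t ∈ Finset.range p, r (j t) * (min B (x (t + 1)) - min B (x t)) :=
          Finset.sum_congr rfl (fun t ht => by rw [hup t (Finset.mem_range.1 ht)])
        rw [g1, g2, sub_self, mul_zero]
        have h1 := hrent p hpk
        have h2 : ∑ t ∈ Finset.range p, r (j t) * (x (t + 1) - x t)
            ≤ ∑ t ∈ Finset.range k, r (j t) * (x (t + 1) - x t) := by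
          apply Finset.sum_le_sum_of_subset_of_nonneg
          · exact Finset.range_subset_range.2 hpk
          · intro t ht _
            have ht := Finset.mem_range.1 ht
            exact mul_nonneg (hr _ (hj t ht)).le (sub_nonneg.2 (hx t ht))
        have h3 : ∑ t ∈ Finset.range p, a (j t) + a (j (k - 1))
            ≤ ∑ t ∈ Finset.range k, a (j t) := by
          obtain ⟨q, rfl⟩ : ∃ q, k = q + 1 := ⟨k - 1, by omega⟩
          rw [Finset.sum_range_succ, Nat.add_sub_cancel]
          refine add_le_add ?_ le_rfl
          apply Finset.sum_le_sum_of_subset_of_nonneg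
          · exact Finset.range_subset_range.2 (by omega)
          · intro t ht _
            have ht := Finset.mem_range.1 ht
            exact ha _ (hj t (by omega))
        have h4 := hAle _ (hj (k - 1) (by omega))
        linarith
end
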